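/- Mehler's formula: for all x, y ∈ ℝ and all α ∈ [0,1), Σ_{n≥0} α^n e_n(x) e_n(y) = (π(1−α²))^{−1/2} exp( −((1−α)/(1+α))·(x+y)²/4 − ((1+α)/(1−α))·(x−y)²/4 ), where (e_n) are the L²-normalized Hermite functions. -/

import Mathlib

/-- The `L²`-normalized Hermite functions
`e_n(x) = (-1)^n c_n e^{x²/2} (d/dx)^n (e^{-x²})` with `c_n⁻¹ = (n!)^{1/2} 2^{n/2} π^{1/4}`. -/
noncomputable def hermiteFn (n : ℕ) (x : ℝ) : ℝ :=
  (-1 : ℝ) ^ n * (((n.factorial : ℝ) ^ ((1:ℝ)/2) * (2:ℝ) ^ ((n:ℝ)/2) * Real.pi ^ ((1:ℝ)/4))⁻¹) *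
    Real.exp (x^2/2) * iteratedDeriv n (fun y => Real.exp (-y^2)) x

/-!
The function `e^{-t²}` is the characteristic function of the centred Gaussian `γ` of variance `2`,
so its `n`-th derivative at `x` is `iⁿ 𝔼[Sⁿ e^{ixS}]` with `S ∼ γ`. For independent `S, T ∼ γ`,
the Mehler series becomes, up to an elementary prefactor, the exponential series
`∑ (-z S T / 2)ⁿ / n! = e^{-z S T / 2}` under the expectation against `e^{i(xS + yT)}`. The
interchange of sum and expectation is dominated by `e^{|z S T| / 2}`, which is integrable exactly
because `|z| < 1`, and what remains is a two-dimensional Gaussian integral.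
-/

open Complex MeasureTheory ProbabilityTheory
open scoped Real NNReal Nat

theorem ofReal_mul_cpow {r : ℝ} (hr : 0 < r) {z : ℂ} (hz : z ≠ 0) (s : ℂ) :
    ((r : ℂ) * z) ^ s = (r : ℂ) ^ s * z ^ s := by
  have hr' : (r : ℂ) ≠ 0 := ofReal_ne_zero.mpr hr.ne'
  rw [cpow_def_of_ne_zero (mul_ne_zero hr' hz), log_ofReal_mul hr hz, ofReal_log hr.le, add_mul,
    exp_add, ← cpow_def_of_ne_zero hr', ← cpow_def_of_ne_zero hz]

theorem iteratedDeriv_ofReal_comp {f : ℝ → ℝ} {n : ℕ} {x : ℝ} (hf : ContDiffAt ℝ n f x) :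
    iteratedDeriv n (fun t => (f t : ℂ)) x = (iteratedDeriv n f x : ℝ) :=
  congrArg (fun F => F fun _ => 1) (ofRealCLM.iteratedFDeriv_comp_left hf le_rfl)

theorem sqrt_inv_mul_pi_div_cpow_half {v : ℝ} (hv : 0 < v) {w : ℂ} (hw : 0 < w.re) :
    ((√(2 * π * v))⁻¹ : ℝ) * (π / (w / (2 * v))) ^ (1 / 2 : ℂ) = w ^ (-(1 / 2) : ℂ) := by
  have hpos : 0 < 2 * π * v := by positivity
  have hw0 : w ≠ 0 := by rintro rfl; simp at hw
  have hsqrt : ((√(2 * π * v) : ℝ) : ℂ) = ((2 * π * v : ℝ) : ℂ) ^ (1 / 2 : ℂ) := by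
    rw [Real.sqrt_eq_rpow, ofReal_cpow hpos.le]
    norm_num
  have hdiv : (π / (w / (2 * v)) : ℂ) = ((2 * π * v : ℝ) : ℂ) * w⁻¹ := by
    push_cast
    field_simp
  have harg : w.arg ≠ π := (mem_slitPlane_iff_arg.mp (.inl hw)).1
  rw [ofReal_inv, hdiv, ofReal_mul_cpow hpos (inv_ne_zero hw0), ← hsqrt, inv_cpow _ _ harg,
    cpow_neg, inv_mul_cancel_left₀]
  exact ofReal_ne_zero.mpr (Real.sqrt_ne_zero'.mpr hpos)

theorem norm_cexp_neg_mul_add_I_mul_le (c : ℂ) (x y s t : ℝ) :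
    ‖cexp (-c * (s * t) + I * (x * s + y * t))‖ ≤ rexp (‖c‖ * |s * t|) := by
  have h : (-c * (s * t) + I * (x * s + y * t)).re = (-c * (s * t : ℝ)).re := by simp
  rw [norm_exp, h, Real.exp_le_exp]
  simpa using re_le_norm (-c * (s * t : ℝ))

section Gaussian

variable {v : ℝ≥0}

theorem integral_cexp_quadratic_gaussianReal {a : ℂ} (ha : 0 < (1 - 2 * v * a).re) (b : ℂ) :
    ∫ t, cexp (a * t ^ 2 + b * t) ∂gaussianReal 0 v =
      (1 - 2 * v * a) ^ (-(1 / 2) : ℂ) * cexp (v * b ^ 2 / (2 * (1 - 2 * v * a))) := by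
  rcases eq_or_ne v 0 with rfl | hv
  · simp
  have hvC : (v : ℂ) ≠ 0 := by simpa
  have hv0 : (0 : ℝ) < v := NNReal.coe_pos.mpr (pos_iff_ne_zero.mpr hv)
  set w : ℂ := 1 - 2 * v * a with hw
  have hw0 : w ≠ 0 := fun h => by simp [h] at ha
  have hre : (-(w / (2 * v))).re < 0 := by
    have : w / (2 * v) = w / ((2 * v : ℝ) : ℂ) := by push_cast; rfl
    rw [this, neg_re, div_ofReal_re, neg_lt_zero]
    positivity
  calc ∫ t, cexp (a * t ^ 2 + b * t) ∂gaussianReal 0 v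
      = (√(2 * π * v))⁻¹ * ∫ t : ℝ, cexp (-(w / (2 * v)) * t ^ 2 + b * t + 0) := by
        simp_rw [integral_gaussianReal_eq_integral_smul hv, real_smul, gaussianPDFReal]
        push_cast
        simp_rw [mul_assoc, integral_const_mul, ← Complex.exp_add, hw]
        congr! 4
        field_simp
        ring
    _ = w ^ (-(1 / 2) : ℂ) * cexp (v * b ^ 2 / (2 * w)) := by
        rw [integral_cexp_quadratic hre, neg_neg, ← mul_assoc,
          sqrt_inv_mul_pi_div_cpow_half hv0 ha]
        congr 2
        field_simp
        ring

theorem integrable_exp_sq_gaussianReal {a : ℝ} (ha : 2 * v * a < 1) :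
    Integrable (fun t => rexp (a * t ^ 2)) (gaussianReal 0 v) := by
  have hw : (1 - 2 * v * a : ℂ) ≠ 0 := by
    exact_mod_cast (sub_pos.mpr ha).ne'
  have hne : ∫ t, cexp (a * t ^ 2 + 0 * t) ∂gaussianReal 0 v ≠ 0 := by
    rw [integral_cexp_quadratic_gaussianReal (by simpa [mul_assoc] using ha)]
    exact mul_ne_zero (by simp [cpow_eq_zero_iff, hw]) (exp_ne_zero _)
  refine (Integrable.of_integral_ne_zero hne).re.congr (.of_forall fun t => ?_)
  simp [← ofReal_pow, ← ofReal_mul, exp_ofReal_re]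

theorem integrable_exp_mul_abs_mul_gaussianReal_prod {r : ℝ} (hr : 0 ≤ r) (hvr : v * r < 1) :
    Integrable (fun p : ℝ × ℝ => rexp (r * |p.1 * p.2|))
      ((gaussianReal 0 v).prod (gaussianReal 0 v)) := by
  have hsq : Integrable (fun t => rexp (r / 2 * t ^ 2)) (gaussianReal 0 v) :=
    integrable_exp_sq_gaussianReal (by linarith)
  refine (hsq.mul_prod hsq).mono' (by fun_prop) (.of_forall fun p => ?_)
  rw [Real.norm_of_nonneg (Real.exp_nonneg _), ← Real.exp_add, Real.exp_le_exp]
  have hamgm : |p.1 * p.2| ≤ (p.1 ^ 2 + p.2 ^ 2) / 2 := by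
    rw [abs_mul, ← sq_abs p.1, ← sq_abs p.2]
    linarith [two_mul_le_add_sq |p.1| |p.2|]
  linarith [mul_le_mul_of_nonneg_left hamgm hr]

theorem integral_cexp_bilinear_gaussianReal (c : ℂ) (x y s : ℝ) :
    ∫ t : ℝ, cexp (-c * (s * t) + I * (x * s + y * t)) ∂gaussianReal 0 v =
      cexp (v * c ^ 2 / 2 * s ^ 2 + I * (x - v * c * y) * s) * cexp (-v * y ^ 2 / 2) := by
  have hmgf (z : ℂ) : ∫ t : ℝ, cexp (z * t) ∂gaussianReal 0 v = cexp (v * z ^ 2 / 2) := by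
    simpa [complexMGF] using complexMGF_id_gaussianReal (μ := 0) (v := v) z
  calc ∫ t : ℝ, cexp (-c * (s * t) + I * (x * s + y * t)) ∂gaussianReal 0 v
      = ∫ t : ℝ, cexp (I * x * s) * cexp ((I * y - c * s) * t) ∂gaussianReal 0 v := by
        congr! 2 with t
        rw [← Complex.exp_add]
        ring_nf
    _ = cexp (I * x * s) * cexp (v * (I * y - c * s) ^ 2 / 2) := by
        rw [integral_const_mul, hmgf]
    _ = cexp (v * c ^ 2 / 2 * s ^ 2 + I * (x - v * c * y) * s) * cexp (-v * y ^ 2 / 2) := by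
        rw [← Complex.exp_add, ← Complex.exp_add]
        congr 1
        linear_combination (v * y ^ 2 / 2 : ℂ) * I_sq

theorem integral_cexp_bilinear_gaussianReal_prod {c : ℂ} (hc : v * ‖c‖ < 1) (x y : ℝ) :
    ∫ p : ℝ × ℝ, cexp (-c * (p.1 * p.2) + I * (x * p.1 + y * p.2))
        ∂(gaussianReal 0 v).prod (gaussianReal 0 v) =
      (1 - (v * c) ^ 2) ^ (-(1 / 2) : ℂ) *
        cexp (-(v * (x ^ 2 + y ^ 2 - 2 * (v * c) * x * y)) / (2 * (1 - (v * c) ^ 2))) := by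
  have hnorm : ‖(v * c) ^ 2‖ < 1 := by
    rw [norm_pow, norm_mul]
    exact pow_lt_one₀ (by positivity) (by simpa using hc) two_ne_zero
  have hw : 1 - 2 * v * (v * c ^ 2 / 2) = 1 - (v * c) ^ 2 := by ring
  have hre : 0 < (1 - 2 * v * (v * c ^ 2 / 2)).re := by
    rw [hw, sub_re, one_re, sub_pos]
    exact (re_le_norm _).trans_lt hnorm
  have hint : Integrable (fun p : ℝ × ℝ => cexp (-c * (p.1 * p.2) + I * (x * p.1 + y * p.2)))
      ((gaussianReal 0 v).prod (gaussianReal 0 v)) :=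
    (integrable_exp_mul_abs_mul_gaussianReal_prod (norm_nonneg c) hc).mono' (by fun_prop)
      (.of_forall fun p => norm_cexp_neg_mul_add_I_mul_le c x y p.1 p.2)
  rw [integral_prod _ hint]
  simp_rw [integral_cexp_bilinear_gaussianReal]
  rw [integral_mul_const, integral_cexp_quadratic_gaussianReal hre, mul_assoc,
    ← Complex.exp_add, hw, mul_pow I, I_sq]
  have hne : (1 - v ^ 2 * c ^ 2 : ℂ) ≠ 0 := by
    rw [← mul_pow]
    exact sub_ne_zero.mpr fun h => by simp [← h] at hnorm
  congr 2
  field_simp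
  ring

end Gaussian

theorem hasSum_iteratedDeriv_charFun_mul {μ ν : Measure ℝ} [IsFiniteMeasure μ] [IsFiniteMeasure ν]
    (hμ : ∀ n : ℕ, MemLp id n μ) (hν : ∀ n : ℕ, MemLp id n ν) {c : ℂ}
    (hc : Integrable (fun p : ℝ × ℝ => rexp (‖c‖ * |p.1 * p.2|)) (μ.prod ν)) (x y : ℝ) :
    HasSum (fun n : ℕ => c ^ n / n ! *
        (iteratedDeriv n (charFun μ) x * iteratedDeriv n (charFun ν) y))
      (∫ p : ℝ × ℝ, cexp (-c * (p.1 * p.2) + I * (x * p.1 + y * p.2)) ∂μ.prod ν) := by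
  have hterm (n : ℕ) : c ^ n / n ! *
      (iteratedDeriv n (charFun μ) x * iteratedDeriv n (charFun ν) y) =
      ∫ p : ℝ × ℝ, (-c * (p.1 * p.2)) ^ n / n ! * cexp (I * (x * p.1 + y * p.2)) ∂μ.prod ν := by
    rw [iteratedDeriv_charFun (hμ n), iteratedDeriv_charFun (hν n), mul_mul_mul_comm,
      ← integral_prod_mul, ← mul_pow, I_mul_I, ← mul_assoc, ← integral_const_mul]
    congr! 2
    rw [mul_add, Complex.exp_add]
    ring_nf
  have hexp (r : ℝ) : ∑' n : ℕ, r ^ n / n ! = rexp r := by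
    rw [Real.exp_eq_exp_ℝ]
    exact (NormedSpace.expSeries_div_hasSum_exp r).tsum_eq
  simp_rw [hterm]
  refine hasSum_integral_of_dominated_convergence
    (fun n p => (‖c‖ * |p.1 * p.2|) ^ n / n !) (fun n => by fun_prop)
    (fun n => .of_forall fun p => ?_) (.of_forall fun p => Real.summable_pow_div_factorial _)
    ?_ (.of_forall fun p => ?_)
  · simp [norm_exp, abs_mul]
  · simpa only [hexp] using hc
  · have h := NormedSpace.expSeries_div_hasSum_exp (-c * (p.1 * p.2))
    rw [← exp_eq_exp_ℂ] at h
    rw [Complex.exp_add]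
    exact h.mul_right _

theorem hasSum_iteratedDeriv_charFun_gaussianReal {v : ℝ≥0} {c : ℂ} (hc : v * ‖c‖ < 1)
    (x y : ℝ) :
    HasSum (fun n : ℕ => c ^ n / n ! * (iteratedDeriv n (charFun (gaussianReal 0 v)) x *
        iteratedDeriv n (charFun (gaussianReal 0 v)) y))
      ((1 - (v * c) ^ 2) ^ (-(1 / 2) : ℂ) *
        cexp (-(v * (x ^ 2 + y ^ 2 - 2 * (v * c) * x * y)) / (2 * (1 - (v * c) ^ 2)))) := by
  rw [← integral_cexp_bilinear_gaussianReal_prod hc]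
  have hmom (n : ℕ) : MemLp id n (gaussianReal 0 v) := memLp_id_gaussianReal n
  exact hasSum_iteratedDeriv_charFun_mul hmom hmom
    (integrable_exp_mul_abs_mul_gaussianReal_prod (norm_nonneg c) hc) x y

theorem iteratedDeriv_charFun_gaussianReal_two (n : ℕ) (x : ℝ) :
    iteratedDeriv n (charFun (gaussianReal 0 2)) x =
      (iteratedDeriv n (fun t => rexp (-t ^ 2)) x : ℝ) := by
  have h : charFun (gaussianReal 0 2) = fun t => (rexp (-t ^ 2) : ℂ) := by
    ext t
    simp [charFun_gaussianReal]
  rw [h, iteratedDeriv_ofReal_comp (ContDiff.contDiffAt (by fun_prop))]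

theorem hermiteFn_mul_hermiteFn (n : ℕ) (x y : ℝ) :
    hermiteFn n x * hermiteFn n y = π ^ (-(1 / 2) : ℝ) * rexp ((x ^ 2 + y ^ 2) / 2) *
      ((iteratedDeriv n (fun t => rexp (-t ^ 2)) x * iteratedDeriv n (fun t => rexp (-t ^ 2)) y) /
        (2 ^ n * n !)) := by
  have hsign : ((-1 : ℝ) ^ n) ^ 2 = 1 := by rw [← pow_mul, mul_comm, pow_mul]; simp
  have hfact : ((n ! : ℝ) ^ ((1 : ℝ) / 2)) ^ 2 = n ! := by
    rw [← Real.rpow_mul_natCast (by positivity)]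
    norm_num
  have htwo : ((2 : ℝ) ^ ((n : ℝ) / 2)) ^ 2 = 2 ^ n := by
    rw [← Real.rpow_mul_natCast (by positivity), ← Real.rpow_natCast]
    norm_num
  have hpi : (π ^ ((1 : ℝ) / 4)) ^ 2 = (π ^ (-(1 / 2) : ℝ))⁻¹ := by
    rw [← Real.rpow_mul_natCast (by positivity), ← Real.rpow_neg (by positivity)]
    norm_num
  have hexp : rexp ((x ^ 2 + y ^ 2) / 2) = rexp (x ^ 2 / 2) * rexp (y ^ 2 / 2) := by
    rw [← Real.exp_add, add_div]
  unfold hermiteFn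
  generalize iteratedDeriv n (fun t => rexp (-t ^ 2)) x = dx
  generalize iteratedDeriv n (fun t => rexp (-t ^ 2)) y = dy
  calc
    _ = ((-1 : ℝ) ^ n) ^ 2 * (((n ! : ℝ) ^ ((1 : ℝ) / 2)) ^ 2 * ((2 : ℝ) ^ ((n : ℝ) / 2)) ^ 2 *
        (π ^ ((1 : ℝ) / 4)) ^ 2)⁻¹ * (rexp (x ^ 2 / 2) * rexp (y ^ 2 / 2)) * (dx * dy) := by
        simp only [mul_inv]
        ring
    _ = _ := by
        rw [hsign, hfact, htwo, hpi, hexp]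
        field_simp

theorem mehler_exponent_eq {K : Type*} [Field K] [CharZero K] {z : K} (hsub : 1 - z ≠ 0)
    (hadd : 1 + z ≠ 0) (x y : K) :
    -((1 - z) / (1 + z) * (x + y) ^ 2 / 4) - (1 + z) / (1 - z) * (x - y) ^ 2 / 4 =
      (x ^ 2 + y ^ 2) / 2 + -(2 * (x ^ 2 + y ^ 2 - 2 * z * x * y)) / (2 * (1 - z ^ 2)) := by
  rw [show 1 - z ^ 2 = (1 - z) * (1 + z) by ring]
  field_simp
  ring

/-- For `‖z‖ < 1` the number `1 - z ^ 2` has positive real part, so the principal branch of the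
power is the analytic continuation of the positive square root. -/
theorem stmt9_general (x y : ℝ) {z : ℂ} (hz : ‖z‖ < 1) :
    HasSum (fun n : ℕ => z ^ n * hermiteFn n x * hermiteFn n y)
      ((π * (1 - z ^ 2)) ^ (-(1 / 2) : ℂ) *
        cexp (-((1 - z) / (1 + z) * (x + y) ^ 2 / 4) - (1 + z) / (1 - z) * (x - y) ^ 2 / 4)) := by
  have hsub : 1 - z ≠ 0 := sub_ne_zero.mpr fun h => by simp [← h] at hz
  have hadd : 1 + z ≠ 0 := fun h => by simp [eq_neg_of_add_eq_zero_right h] at hz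
  have hne : 1 - z ^ 2 ≠ 0 := by
    convert mul_ne_zero hsub hadd using 1
    ring
  have htwo : ((2 : ℝ≥0) : ℂ) * (z / 2) = z := mul_div_cancel₀ z two_ne_zero
  have hz' : ((2 : ℝ≥0) : ℝ) * ‖z / 2‖ < 1 := by simpa [mul_div_cancel₀] using hz
  have hsum := (hasSum_iteratedDeriv_charFun_gaussianReal hz' x y).mul_left
    ((π : ℂ) ^ (-(1 / 2) : ℂ) * cexp ((x ^ 2 + y ^ 2) / 2))
  rw [htwo] at hsum
  rw [ofReal_mul_cpow Real.pi_pos hne, mehler_exponent_eq hsub hadd, Complex.exp_add,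
    mul_mul_mul_comm]
  refine hsum.congr_fun fun n => ?_
  rw [div_pow, mul_assoc, ← ofReal_mul, hermiteFn_mul_hermiteFn,
    iteratedDeriv_charFun_gaussianReal_two, iteratedDeriv_charFun_gaussianReal_two]
  push_cast [ofReal_cpow Real.pi_nonneg]
  ring

/-- Mehler's formula. -/
theorem stmt9 (x y α : ℝ) (hα0 : 0 ≤ α) (hα1 : α < 1) :
    HasSum (fun n : ℕ => α ^ n * hermiteFn n x * hermiteFn n y)
      ((Real.pi * (1 - α^2)) ^ (-(1/2:ℝ)) *
        Real.exp (-((1-α)/(1+α) * (x+y)^2/4) - (1+α)/(1-α) * (x-y)^2/4)) := by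
  have hpos : 0 ≤ π * (1 - α ^ 2) :=
    mul_nonneg Real.pi_nonneg (sub_nonneg.mpr (pow_le_one₀ hα0 hα1.le))
  rw [← hasSum_ofReal]
  simpa [ofReal_cpow hpos] using stmt9_general x y (z := α) (by simpa [abs_of_nonneg hα0])
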